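/- Every vertex cut of Γ(R) contains the entire set A_uv = {x·uv : x ∈ 𝔽_p*}; in particular, every set S of vertices such that deleting S disconnects Γ(R) has cardinality at least p − 1. -/

import Mathlib

/- `Rng p` models the ring `R = 𝔽_p[u,v]/⟨u², v², uv - vu⟩`:
every element is uniquely `a + b·u + c·v + d·uv` with `a b c d : ZMod p`. -/
set_option synthInstance.maxHeartbeats 1000000
set_option maxHeartbeats 1000000

abbrev Rng (p : ℕ) : Type := DualNumber (DualNumber (ZMod p))

/-- The element `u` of `R` (satisfies `u² = 0`). -/
def uu (p : ℕ) : Rng p := TrivSqZeroExt.inl DualNumber.eps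

/-- The element `v` of `R` (satisfies `v² = 0`). -/
def vv (p : ℕ) : Rng p := DualNumber.eps

/-- The vertex set `Z*(R)`: nonzero zero-divisors of `R`. -/
abbrev Vtx (p : ℕ) : Type := {x : Rng p // x ≠ 0 ∧ ∃ y : Rng p, y ≠ 0 ∧ x * y = 0}

/-- The zero-divisor graph `Γ(R)`. -/
def ZDG (p : ℕ) : SimpleGraph (Vtx p) where
  Adj a b := a ≠ b ∧ (a : Rng p) * (b : Rng p) = 0
  symm := ⟨fun a b h => ⟨h.1.symm, (mul_comm (b : Rng p) (a : Rng p)).trans h.2⟩⟩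
  loopless := ⟨fun a h => h.1 rfl⟩

instance (p : ℕ) : DecidableEq (Rng p) :=
  inferInstanceAs (DecidableEq ((ZMod p × ZMod p) × ZMod p × ZMod p))

instance (p : ℕ) [NeZero p] : Fintype (Rng p) :=
  inferInstanceAs (Fintype ((ZMod p × ZMod p) × ZMod p × ZMod p))

instance (p : ℕ) : DecidableRel (ZDG p).Adj :=
  fun a b => inferInstanceAs (Decidable (a ≠ b ∧ (a : Rng p) * (b : Rng p) = 0))

/-!
If every zero-divisor kills a vertex `a` of the zero-divisor graph, then `a` is universal, and a
universal vertex that is not deleted keeps the graph connected; so `a` lies in every vertex cut.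
Passing from `A` to `A[ε]` turns an element `a` killed by all zero-divisors into another one, `a ε`,
because an element of `A[ε]` with regular constant term is regular. Starting from a domain, where
the only zero-divisor is `0`, two such steps produce the multiples of `u v`.
-/

section ZeroDivisorGraph

open scoped nonZeroDivisors

/-- The nonzero zero-divisors of `M`, the vertices of its zero-divisor graph; `Vtx p` is the case
`M = Rng p`. -/
abbrev NonzeroZeroDivisor (M : Type*) [Mul M] [Zero M] : Type _ :=
  {x : M // x ≠ 0 ∧ ∃ y : M, y ≠ 0 ∧ x * y = 0}

/-- The zero-divisor graph of `M`: distinct vertices are adjacent when their product vanishes.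
`ZDG p` is definitionally the case `M = Rng p`. -/
def zeroDivisorGraph (M : Type*) [CommMonoidWithZero M] : SimpleGraph (NonzeroZeroDivisor M) where
  Adj a b := a ≠ b ∧ (a : M) * (b : M) = 0
  symm := ⟨fun a b h => ⟨h.1.symm, (mul_comm (b : M) (a : M)).trans h.2⟩⟩
  loopless := ⟨fun _ h => h.1 rfl⟩

variable {M : Type*} [CommMonoidWithZero M]

/-- `a` is killed by every zero-divisor of `M`, where `0` counts as a zero-divisor. The nonzero
zero-divisors with this property are universal vertices of the zero-divisor graph. -/
def AnnihilatesZeroDivisors (a : M) : Prop :=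
  ∀ x ∉ M⁰, x * a = 0

theorem annihilatesZeroDivisors_of_noZeroDivisors [NoZeroDivisors M] (a : M) :
    AnnihilatesZeroDivisors a := by
  intro x hx
  have hx0 : x = 0 := of_not_not fun h => hx (mem_nonZeroDivisors_of_ne_zero h)
  rw [hx0, zero_mul]

theorem NonzeroZeroDivisor.notMem_nonZeroDivisors (a : NonzeroZeroDivisor M) : (a : M) ∉ M⁰ := by
  obtain ⟨-, y, hy, hay⟩ := a.2
  exact notMem_nonZeroDivisors_iff_left.mpr ⟨y, hay, hy⟩

theorem AnnihilatesZeroDivisors.isUniversal {a : NonzeroZeroDivisor M}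
    (ha : AnnihilatesZeroDivisors (a : M)) : (zeroDivisorGraph M).IsUniversal a :=
  fun b hab => ⟨hab, (mul_comm _ _).trans (ha b b.notMem_nonZeroDivisors)⟩

end ZeroDivisorGraph

theorem mem_of_isUniversal_of_not_connected_induce_compl {V : Type*} {G : SimpleGraph V}
    {S : Set V} {a : V} (ha : G.IsUniversal a) (hS : ¬ (G.induce Sᶜ).Connected) : a ∈ S := by
  by_contra haS
  have universal_in_complement : (G.induce Sᶜ).IsUniversal ⟨a, haS⟩ :=
    fun b hab => ha fun h => hab (Subtype.ext h)
  exact hS (.of_isUniversal universal_in_complement)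

section DualNumber

open TrivSqZeroExt
open scoped DualNumber nonZeroDivisors

variable {A : Type*} [CommSemiring A]

theorem mem_nonZeroDivisors_of_fst_mem {x : A[ε]} (hx : x.fst ∈ A⁰) : x ∈ A[ε]⁰ := by
  rw [mem_nonZeroDivisors_iff_left] at hx ⊢
  intro y hxy
  have hfst : y.fst = 0 := hx _ (by rw [← fst_mul, hxy, fst_zero])
  have hsnd : y.snd = 0 := hx _ <| by
    have := congrArg snd hxy
    rwa [DualNumber.snd_mul, hfst, mul_zero, add_zero, snd_zero] at this
  exact TrivSqZeroExt.ext hfst hsnd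

theorem AnnihilatesZeroDivisors.inr {a : A} (ha : AnnihilatesZeroDivisors a) :
    AnnihilatesZeroDivisors (inr a : A[ε]) := by
  intro x hx
  have hfst : a * x.fst = 0 := by
    rw [mul_comm]
    exact ha _ fun h => hx (mem_nonZeroDivisors_of_fst_mem h)
  ext <;> simp [hfst]

theorem smul_inl_eps_mul_eps (x : A) : x • (inl ε * ε : A[ε][ε]) = inr (inr x) := by
  ext <;> simp

theorem annihilatesZeroDivisors_smul_inl_eps_mul_eps [NoZeroDivisors A] (x : A) :
    AnnihilatesZeroDivisors (x • (inl ε * ε : A[ε][ε])) := by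
  rw [smul_inl_eps_mul_eps]
  exact (annihilatesZeroDivisors_of_noZeroDivisors x).inr.inr

theorem injective_smul_inl_eps_mul_eps :
    Function.Injective fun x : A => x • (inl ε * ε : A[ε][ε]) := by
  simp only [smul_inl_eps_mul_eps]
  exact inr_injective.comp inr_injective

theorem smul_inl_eps_mul_eps_mul_self (x : A) :
    x • (inl ε * ε : A[ε][ε]) * x • (inl ε * ε : A[ε][ε]) = 0 := by
  rw [smul_inl_eps_mul_eps, inr_mul_inr]

theorem card_sub_one_le_encard_of_smul_inl_eps_mul_eps_mem {S : Set (NonzeroZeroDivisor A[ε][ε])}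
    (hS : ∀ a : NonzeroZeroDivisor A[ε][ε],
      (∃ x : A, x ≠ 0 ∧ (a : A[ε][ε]) = x • (inl ε * ε)) → a ∈ S) :
    ENat.card A - 1 ≤ S.encard := by
  have image_subset : (fun x : A => x • (inl ε * ε : A[ε][ε])) '' {0}ᶜ ⊆ Subtype.val '' S := by
    rintro _ ⟨x, hx, rfl⟩
    have hne : x • (inl ε * ε : A[ε][ε]) ≠ 0 := by
      simpa only [zero_smul] using injective_smul_inl_eps_mul_eps.ne hx
    exact ⟨⟨_, hne, _, hne, smul_inl_eps_mul_eps_mul_self x⟩, hS _ ⟨x, hx, rfl⟩, rfl⟩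
  calc
    ENat.card A - 1 = ({0}ᶜ : Set A).encard := by
      rw [Set.compl_eq_univ_sdiff, Set.encard_sdiff_singleton_of_mem (Set.mem_univ 0),
        Set.encard_univ]
    _ = ((fun x : A => x • (inl ε * ε : A[ε][ε])) '' {0}ᶜ).encard :=
      (injective_smul_inl_eps_mul_eps.encard_image _).symm
    _ ≤ (Subtype.val '' S).encard := Set.encard_le_encard image_subset
    _ = S.encard := Subtype.val_injective.encard_image S

theorem stmt11_general {K : Type*} [CommSemiring K] [NoZeroDivisors K]
    (S : Set (NonzeroZeroDivisor K[ε][ε]))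
    (hS : ¬ ((zeroDivisorGraph K[ε][ε]).induce Sᶜ).Connected) :
    (∀ a : NonzeroZeroDivisor K[ε][ε],
      (∃ x : K, x ≠ 0 ∧ (a : K[ε][ε]) = x • (inl ε * ε)) → a ∈ S) ∧
      ENat.card K - 1 ≤ S.encard := by
  have multiples_mem (a : NonzeroZeroDivisor K[ε][ε])
      (ha : ∃ x : K, x ≠ 0 ∧ (a : K[ε][ε]) = x • (inl ε * ε)) : a ∈ S := by
    obtain ⟨x, -, hax⟩ := ha
    have annihilates : AnnihilatesZeroDivisors (a : K[ε][ε]) :=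
      hax ▸ annihilatesZeroDivisors_smul_inl_eps_mul_eps x
    exact mem_of_isUniversal_of_not_connected_induce_compl annihilates.isUniversal hS
  exact ⟨multiples_mem, card_sub_one_le_encard_of_smul_inl_eps_mul_eps_mem multiples_mem⟩

end DualNumber

theorem stmt11 (p : ℕ) [Fact p.Prime] (hodd : Odd p) (S : Set (Vtx p))
    (hS : ¬ ((ZDG p).induce Sᶜ).Connected) :
    (∀ a : Vtx p, (∃ x : ZMod p, x ≠ 0 ∧ (a : Rng p) = x • (uu p * vv p)) → a ∈ S) ∧
      p - 1 ≤ S.ncard := by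
  obtain ⟨multiples_mem, card_le⟩ := stmt11_general S hS
  rw [ENat.card_eq_coe_fintype_card, ZMod.card, ← S.toFinite.cast_ncard_eq] at card_le
  exact ⟨multiples_mem, by exact_mod_cast card_le⟩
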